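/- Let (W,R) be a Coxeter system with R finite, and let s, s' be R-reflections such that the subgroup ⟨s,s'⟩ they generate is finite. Then there exist r, r' ∈ R generating a finite subgroup and an element w ∈ W such that w⟨s,s'⟩w⁻¹ is contained in ⟨r,r'⟩. -/

import Mathlib

variable {B : Type*} {W : Type*} [Group W] {M : CoxeterMatrix B}

/-- A subset `J` of the index set is *spherical* if the corresponding simple reflections
generate a finite subgroup. -/
def Spherical (cs : CoxeterSystem M W) (J : Set B) : Prop :=
  (Subgroup.closure (cs.simple '' J) : Set W).Finite

/-- Two indices are *adjacent* if the corresponding simple reflections generate a finite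
subgroup. -/
def Adjacent (cs : CoxeterSystem M W) (i j : B) : Prop :=
  (Subgroup.closure {cs.simple i, cs.simple j} : Set W).Finite

/-- A subset is *2-spherical* if every pair of its elements is adjacent. -/
def TwoSpherical (cs : CoxeterSystem M W) (J : Set B) : Prop :=
  ∀ i ∈ J, ∀ j ∈ J, Adjacent cs i j

/-- A subset is *irreducible* if it cannot be partitioned into two nonempty subsets whose
corresponding simple reflections commute elementwise. -/
def IrreducibleSubset (cs : CoxeterSystem M W) (J : Set B) : Prop :=
  ¬ ∃ K L : Set B, K.Nonempty ∧ L.Nonempty ∧ Disjoint K L ∧ K ∪ L = J ∧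
      ∀ k ∈ K, ∀ l ∈ L, Commute (cs.simple k) (cs.simple l)

/-- `perpIn cs T J` is the set `J⊥` of elements of `T ∖ J` whose simple reflections commute
with those of every element of `J`. -/
def perpIn (cs : CoxeterSystem M W) (T J : Set B) : Set B :=
  {i ∈ T \ J | ∀ j ∈ J, Commute (cs.simple i) (cs.simple j)}

/-- A subset `T` of the index set is *connected* if any two of its elements are joined by a
path inside `T` whose edges are adjacent pairs. -/
def ConnectedIn (cs : CoxeterSystem M W) (T : Set B) : Prop :=
  ∀ a ∈ T, ∀ b ∈ T,
    Relation.ReflTransGen (fun x y => x ∈ T ∧ y ∈ T ∧ Adjacent cs x y) a b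

/-- A subset `T` is *twist-rigid* if for every irreducible spherical subset `L ⊆ T` the set
`T ∖ (L ∪ L⊥)` is connected, where `L⊥` is taken inside `T`. -/
def TwistRigidIn (cs : CoxeterSystem M W) (T : Set B) : Prop :=
  ∀ L ⊆ T, IrreducibleSubset cs L → Spherical cs L →
    ConnectedIn cs (T \ (L ∪ perpIn cs T L))

/-- A pair `(s, w)` is a *base* if `ℓ(w⁻¹ s w) = 2 ℓ(w) + 1` and every reflection `t` with
`ℓ(t w) < ℓ(w)` generates together with `s` a finite subgroup. -/
def IsBase (cs : CoxeterSystem M W) (s : B) (w : W) : Prop :=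
  cs.length (w⁻¹ * cs.simple s * w) = 2 * cs.length w + 1 ∧
    ∀ t : W, cs.IsReflection t → cs.length (t * w) < cs.length w →
      (Subgroup.closure {cs.simple s, t} : Set W).Finite

/-- `J` is the *support* of `(s, w)` if it is the smallest subset of the index set containing
`s` with `w ∈ W_J`. -/
def IsSupport (cs : CoxeterSystem M W) (s : B) (w : W) (J : Set B) : Prop :=
  s ∈ J ∧ w ∈ Subgroup.closure (cs.simple '' J) ∧
    ∀ J' : Set B, s ∈ J' → w ∈ Subgroup.closure (cs.simple '' J') → J ⊆ J'

/-- A base `(s, w)` is *simple* if `w` is represented by a reduced word whose letters are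
pairwise distinct and distinct from `s`. -/
def IsSimpleBase (cs : CoxeterSystem M W) (s : B) (w : W) : Prop :=
  IsBase cs s w ∧ ∃ l : List B, w = cs.wordProd l ∧ cs.length w = l.length ∧
    l.Nodup ∧ s ∉ l

/-- The *shadow* of a base `(s, w)` with support `J`: the set of `j ∈ J` with
`ℓ((wj)⁻¹ s (wj)) ≤ ℓ(w⁻¹ s w)`. -/
def shadow (cs : CoxeterSystem M W) (s : B) (w : W) (J : Set B) : Set B :=
  {j ∈ J | cs.length ((w * cs.simple j)⁻¹ * cs.simple s * (w * cs.simple j)) ≤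
    cs.length (w⁻¹ * cs.simple s * w)}

/-!
Let `W` act on the space spanned by the simple roots by its geometric representation, and let `D`
be a finite subgroup of `W`. Composing a strictly positive functional with the sum of the elements
of `D` gives a `D`-invariant functional `y`. All but finitely many positive roots stay positive
under all of `D`, so `y` is positive on all but finitely many positive roots, and hence `y ∘ w` lies
in the closed fundamental chamber for some `w`. The stabilizer of `y ∘ w` is then the finite
standard parabolic subgroup `W_J`, where `J` consists of the simple roots that `y ∘ w` kills, and
`w⁻¹ D w ≤ W_J`.

If the strictly positive functional is generic, then every root killed by `y` is already killed by
the sum over `D`, so it lies in the span of the vectors `d v - v`. When `D` is generated by two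
reflections this span is at most two-dimensional, which leaves room for at most two simple roots
in `J`.
-/

section Reflections

open Module Polynomial.Chebyshev

theorem sin_pi_div_pos {m : ℕ} (hm : 2 ≤ m) : 0 < Real.sin (Real.pi / m) := by
  have hm' : (2 : ℝ) ≤ m := mod_cast hm
  exact Real.sin_pos_of_pos_of_lt_pi (by positivity) (div_lt_self Real.pi_pos (by linarith))

theorem S_eval_two_mul_cos_pi_div_nonneg {m k : ℕ} (hm : m ≠ 1) (hk : m = 0 ∨ k ≤ m) :
    0 ≤ (S ℝ (k - 1)).eval (2 * Real.cos (Real.pi / m)) := by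
  rcases Nat.eq_zero_or_pos m with rfl | hpos
  · simp [S_eval_two]
  have hsin := sin_pi_div_pos (m := m) (by lia)
  refine nonneg_of_mul_nonneg_left ?_ hsin
  rw [S_two_mul_real_cos]
  have hkm : (k : ℝ) ≤ m := by exact_mod_cast (by lia : k ≤ m)
  have hpos' : (0 : ℝ) < m := mod_cast hpos
  refine Real.sin_nonneg_of_nonneg_of_le_pi (by push_cast; ring_nf; positivity) ?_
  calc ((k - 1 : ℤ) + 1 : ℝ) * (Real.pi / m) = k / m * Real.pi := by push_cast; ring
    _ ≤ 1 * Real.pi := by gcongr; exact (div_le_one hpos').2 hkm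
    _ = Real.pi := one_mul _

theorem S_eval_two_mul_cos_eq_zero {φ : ℝ} {n : ℤ} (hφ : Real.sin φ ≠ 0)
    (h : Real.sin ((n + 1) * φ) = 0) : (S ℝ n).eval (2 * Real.cos φ) = 0 :=
  (mul_eq_zero.1 ((S_two_mul_real_cos φ n).trans h)).resolve_right hφ

theorem S_eval_two_mul_cos_add_eq_zero {φ : ℝ} {n : ℤ} (hφ : Real.sin φ ≠ 0)
    (h : Real.sin ((n + 1) * φ) + Real.sin (n * φ) = 0) :
    (S ℝ n).eval (2 * Real.cos φ) + (S ℝ (n - 1)).eval (2 * Real.cos φ) = 0 := by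
  refine (mul_eq_zero.1 ?_).resolve_right hφ
  rw [add_mul, S_two_mul_real_cos, S_two_mul_real_cos, ← h]
  push_cast
  ring_nf

theorem reflection_mul_reflection_sq_eq_one {R V : Type*} [CommRing R] [AddCommGroup V]
    [Module R V] {x y : V} {f g : Dual R V} (hf : f x = 2) (hg : g y = 2) (hfy : f y = 0)
    (hgx : g x = 0) : (reflection hf * reflection hg) ^ 2 = 1 := by
  ext v
  simp only [pow_two, LinearEquiv.mul_apply, reflection_apply, map_sub, map_smul, hf, hg, hfy, hgx,
    LinearEquiv.coe_one, id_eq]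
  module

theorem reflection_mul_reflection_pow_eq_one {V : Type*} [AddCommGroup V] [Module ℝ V]
    {x y : V} {f g : Dual ℝ V} (hf : f x = 2) (hg : g y = 2) {m : ℕ} (hm : 3 ≤ m)
    (h : f y * g x = 4 * Real.cos (Real.pi / m) ^ 2) :
    (reflection hf * reflection hg) ^ m = 1 := by
  have hm0 : (m : ℝ) ≠ 0 := by positivity
  have hm3 : (3 : ℝ) ≤ m := mod_cast hm
  set φ : ℝ := 2 * Real.pi / m with hφ
  have ht : 2 * Real.cos φ = f y * g x - 2 := by
    rw [h, show φ = 2 * (Real.pi / m) by ring, Real.cos_two_mul]; ring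
  have hsin : Real.sin φ ≠ 0 := by
    refine (Real.sin_pos_of_pos_of_lt_pi (by positivity) ?_).ne'
    rw [hφ, div_lt_iff₀ (by linarith)]
    nlinarith [Real.pi_pos]
  ext z
  -- Both Chebyshev coefficients of the `m`-th power share a factor, which vanishes at `2 * cos φ`.
  rw [reflection_mul_reflection_pow_apply hf hg m z _ ht]
  obtain ⟨k, rfl | rfl⟩ := m.even_or_odd'
  · have hS : (S ℝ (k - 1)).eval (2 * Real.cos φ) = 0 := by
      refine S_eval_two_mul_cos_eq_zero hsin ?_
      have hk : (k : ℝ) ≠ 0 := by intro h; simp [h] at hm0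
      rw [show ((k - 1 : ℤ) + 1 : ℝ) * φ = Real.pi by rw [hφ]; push_cast; field_simp; ring,
        Real.sin_pi]
    rw [show ((2 * k : ℕ) - 2 : ℤ) / 2 = k - 1 by lia,
      show ((2 * k : ℕ) - 1 : ℤ) / 2 = k - 1 by lia, hS]
    simp
  · have hS : (S ℝ k).eval (2 * Real.cos φ) + (S ℝ (k - 1)).eval (2 * Real.cos φ) = 0 := by
      refine S_eval_two_mul_cos_add_eq_zero hsin ?_
      rw [show ((k : ℤ) + 1 : ℝ) * φ = 2 * Real.pi - (k : ℤ) * φ by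
        push_cast at *; rw [hφ]; field_simp; ring, Real.sin_two_pi_sub, neg_add_cancel]
    rw [show ((2 * k + 1 : ℕ) - 2 : ℤ) / 2 = k - 1 by lia,
      show ((2 * k + 1 : ℕ) - 1 : ℤ) / 2 = k by lia,
      show ((2 * k + 1 : ℕ) - 3 : ℤ) / 2 = k - 1 by lia,
      show ((2 * k + 1 : ℕ) : ℤ) / 2 = k by lia, hS]
    simp

end Reflections

section Representations

open Representation

variable {k G V : Type*} [CommRing k] [Group G] [AddCommGroup V] [Module k V]
  (ρ : Representation k G V)

theorem mem_coinvariantsKer_of_norm_apply_eq_zero [Fintype G] (hG : IsUnit (Fintype.card G : k))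
    {v : V} (hv : ρ.norm v = 0) : v ∈ Coinvariants.ker ρ := by
  have h : (Fintype.card G : k) • Coinvariants.mk ρ v = 0 := by
    calc (Fintype.card G : k) • Coinvariants.mk ρ v = ∑ g, Coinvariants.mk ρ (ρ g v) := by
          simp [Nat.cast_smul_eq_nsmul]
      _ = Coinvariants.mk ρ (ρ.norm v) := by rw [Representation.norm, LinearMap.sum_apply, map_sum]
      _ = 0 := by rw [hv, map_zero]
  exact (Coinvariants.mk_eq_zero ρ).1 (hG.smul_eq_zero.1 h)

theorem coinvariantsKer_comp_subtype_closure_le {T : Set G} {N : Submodule k V}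
    (hT : ∀ t ∈ T, ∀ v, ρ t v - v ∈ N) :
    Coinvariants.ker (ρ.comp (Subgroup.closure T).subtype) ≤ N := by
  rw [Coinvariants.ker, Submodule.span_le]
  rintro _ ⟨⟨⟨g, hg⟩, v⟩, rfl⟩
  change ρ g v - v ∈ N
  induction hg using Subgroup.closure_induction generalizing v with
  | mem t ht => exact hT t ht v
  | one => simp
  | mul a b _ _ ha hb =>
    rw [map_mul, Module.End.mul_apply, ← sub_add_sub_cancel _ (ρ b v)]
    exact add_mem (ha _) (hb v)
  | inv a _ ha =>
    rw [← neg_mem_iff, neg_sub]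
    simpa using ha (ρ a⁻¹ v)

end Representations

section Cardinality

theorem encard_le_of_linearIndepOn_of_image_subset_span {k V ι : Type*} [Ring k]
    [StrongRankCondition k] [AddCommGroup V] [Module k V] {v : ι → V} {s : Set ι} {t : Set V}
    (hv : LinearIndepOn k v s) (hst : v '' s ⊆ Submodule.span k t) : s.encard ≤ t.encard := by
  calc s.encard = (Module.rank k (Submodule.span k (v '' s))).toENat :=
        (toENat_rank_span_set hv).symm
    _ ≤ (Cardinal.mk t).toENat :=
        OrderHomClass.mono Cardinal.toENat <|
          (Submodule.rank_mono (Submodule.span_le.2 hst)).trans (rank_span_le t)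
    _ = t.encard := Set.toENat_cardinalMk t

theorem exists_eq_pair_of_encard_le_two {α : Type*} {s : Set α} (hne : s.Nonempty)
    (hs : s.encard ≤ 2) : ∃ a b, s = {a, b} := by
  obtain h2 | h2 := hs.eq_or_lt
  · obtain ⟨a, b, -, h⟩ := Set.encard_eq_two.1 h2
    exact ⟨a, b, h⟩
  · have h1 : s.encard ≤ 1 := Order.le_of_lt_add_one (by rwa [one_add_one_eq_two])
    obtain ⟨a, h⟩ := (Set.encard_le_one_iff_eq.1 h1).resolve_left hne.ne_empty
    exact ⟨a, a, by rw [h, Set.pair_eq_singleton]⟩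

end Cardinality

section GeometricRepresentation

open Module Polynomial.Chebyshev CoxeterSystem

/-- The canonical symmetric bilinear form of a Coxeter matrix on the real vector space with basis
`B`, scaled so that the simple roots have norm `2`: a simple root is then its own coroot. An entry
`M i j = 0`, encoding `∞`, yields `-2`, because `π / 0 = 0`. -/
noncomputable def canonicalForm (M : CoxeterMatrix B) : LinearMap.BilinForm ℝ (B →₀ ℝ) :=
  Finsupp.linearCombination ℝ fun i =>
    Finsupp.linearCombination ℝ fun j => -2 * Real.cos (Real.pi / M i j)

/-- The simple root of index `i`, realised as a basis vector of `B →₀ ℝ`. -/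
noncomputable def simpleRoot (i : B) : B →₀ ℝ := Finsupp.single i 1

theorem simpleRoot_nonneg (i : B) : 0 ≤ simpleRoot i :=
  Finsupp.single_nonneg.2 zero_le_one

theorem simpleRoot_apply_self (i : B) : simpleRoot i i = 1 :=
  Finsupp.single_eq_same

theorem linearIndependent_simpleRoot : LinearIndependent ℝ (simpleRoot : B → B →₀ ℝ) :=
  Finsupp.linearIndependent_single_one ℝ B

theorem canonicalForm_simpleRoot (i j : B) :
    canonicalForm M (simpleRoot i) (simpleRoot j) = -2 * Real.cos (Real.pi / M i j) := by
  simp [canonicalForm, simpleRoot]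

theorem canonicalForm_simpleRoot_self (M : CoxeterMatrix B) (i : B) :
    canonicalForm M (simpleRoot i) (simpleRoot i) = 2 := by
  simp [canonicalForm_simpleRoot]

theorem isSymm_canonicalForm (M : CoxeterMatrix B) : (canonicalForm M).IsSymm := by
  refine ⟨fun u v => ?_⟩
  suffices canonicalForm M = (canonicalForm M).flip from LinearMap.congr_fun₂ this u v
  ext i j
  simp [canonicalForm, M.symmetric i j]

/-- The linear reflection in the simple root of index `i`. -/
noncomputable def simpleReflection (M : CoxeterMatrix B) (i : B) :
    (B →₀ ℝ) ≃ₗ[ℝ] (B →₀ ℝ) :=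
  reflection (canonicalForm_simpleRoot_self M i)

theorem isLiftable_simpleReflection (M : CoxeterMatrix B) : M.IsLiftable (simpleReflection M) := by
  intro i j
  obtain rfl | hij := eq_or_ne i j
  · rw [M.diagonal, pow_one]
    exact LinearEquiv.ext (involutive_reflection (canonicalForm_simpleRoot_self M i))
  have h1 := M.off_diagonal i j hij
  have hji := canonicalForm_simpleRoot (M := M) j i
  rw [M.symmetric j i] at hji
  obtain h0 | h2 | h3 : M i j = 0 ∨ M i j = 2 ∨ 3 ≤ M i j := by lia
  · rw [h0, pow_zero]
  · rw [h2]
    exact reflection_mul_reflection_sq_eq_one _ _ (by simp [canonicalForm_simpleRoot, h2])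
      (by simp [hji, h2])
  · refine reflection_mul_reflection_pow_eq_one _ _ h3 ?_
    rw [hji, canonicalForm_simpleRoot]
    ring

/-- The geometric (Tits) representation, in which each simple reflection of the Coxeter system acts
as the reflection in the corresponding simple root. -/
noncomputable def geomRep (cs : CoxeterSystem M W) : Representation ℝ W (B →₀ ℝ) :=
  (LinearEquiv.automorphismGroup.toLinearMapMonoidHom).comp
    (cs.lift ⟨simpleReflection M, isLiftable_simpleReflection M⟩)

variable (cs : CoxeterSystem M W)

theorem geomRep_mul_apply (u w : W) (v : B →₀ ℝ) :
    geomRep cs (u * w) v = geomRep cs u (geomRep cs w v) := by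
  rw [map_mul, Module.End.mul_apply]

theorem geomRep_simple_apply (i : B) (v : B →₀ ℝ) :
    geomRep cs (cs.simple i) v = v - canonicalForm M (simpleRoot i) v • simpleRoot i := by
  rw [geomRep, MonoidHom.comp_apply, lift_apply_simple]
  exact reflection_apply v (canonicalForm_simpleRoot_self M i)

theorem geomRep_simple_simpleRoot_self (i : B) :
    geomRep cs (cs.simple i) (simpleRoot i) = -simpleRoot i := by
  rw [geomRep_simple_apply, canonicalForm_simpleRoot_self]
  module

theorem geomRep_simple_simpleRoot (i j : B) :
    geomRep cs (cs.simple i) (simpleRoot j) =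
      simpleRoot j + (2 * Real.cos (Real.pi / M i j)) • simpleRoot i := by
  rw [geomRep_simple_apply, canonicalForm_simpleRoot]
  module

theorem canonicalForm_geomRep_self (w : W) (v : B →₀ ℝ) :
    canonicalForm M (geomRep cs w v) (geomRep cs w v) = canonicalForm M v v := by
  induction w using cs.simple_induction_left with
  | one => simp
  | mul_simple_left w i ih =>
    rw [geomRep_mul_apply, geomRep_simple_apply, ← ih]
    simp only [map_sub, map_smul, LinearMap.sub_apply, LinearMap.smul_apply, smul_eq_mul,
      canonicalForm_simpleRoot_self, (isSymm_canonicalForm M).eq _ (simpleRoot i)]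
    ring

end GeometricRepresentation

section Positivity

open Polynomial.Chebyshev CoxeterSystem

variable (cs : CoxeterSystem M W)

theorem exists_eq_mul_wordProd_alternatingWord {w : W} {s : B} (t : B)
    (hs : ¬ cs.IsRightDescent w s) :
    ∃ v k, w = v * cs.wordProd (alternatingWord s t k) ∧ cs.length w = cs.length v + k ∧
      ¬ cs.IsRightDescent v s ∧ ¬ cs.IsRightDescent v t := by
  induction hn : cs.length w using Nat.strong_induction_on generalizing w s t with
  | _ n ih =>
  subst hn
  by_cases ht : cs.IsRightDescent w t
  · have hwt : ¬ cs.IsRightDescent (w * cs.simple t) t := by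
      rwa [← cs.isRightDescent_iff_not_isRightDescent_mul]
    obtain ⟨v, k, hw, hlen, hvt, hvs⟩ := ih _ ht s hwt rfl
    refine ⟨v, k + 1, ?_, ?_, hvs, hvt⟩
    · rw [alternatingWord_succ, cs.wordProd_concat, ← mul_assoc, ← hw,
        cs.simple_mul_simple_cancel_right]
    · rw [← cs.isRightDescent_iff.1 ht, hlen, add_assoc]
  · exact ⟨w, 0, by simp [alternatingWord], rfl, hs, ht⟩

theorem isReduced_alternatingWord_of_length_eq_add {v : W} {s t : B} {k : ℕ}
    (h : cs.length (v * cs.wordProd (alternatingWord s t k)) = cs.length v + k) :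
    cs.IsReduced (alternatingWord s t k) := by
  have hmul := cs.length_mul_le v (cs.wordProd (alternatingWord s t k))
  have hle := cs.length_wordProd_le (alternatingWord s t k)
  rw [length_alternatingWord] at hle
  rw [CoxeterSystem.IsReduced, length_alternatingWord]
  lia

theorem geomRep_wordProd_alternatingWord_simpleRoot (s t : B) (k : ℕ) :
    geomRep cs (cs.wordProd (alternatingWord s t k)) (simpleRoot s) =
      if Even k then
        (S ℝ k).eval (2 * Real.cos (Real.pi / M s t)) • simpleRoot s +
          (S ℝ (k - 1)).eval (2 * Real.cos (Real.pi / M s t)) • simpleRoot t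
      else
        (S ℝ (k - 1)).eval (2 * Real.cos (Real.pi / M s t)) • simpleRoot s +
          (S ℝ k).eval (2 * Real.cos (Real.pi / M s t)) • simpleRoot t := by
  induction k with
  | zero => simp [alternatingWord]
  | succ k ih =>
    have hS : (S ℝ (k + 1)).eval (2 * Real.cos (Real.pi / M s t)) =
        2 * Real.cos (Real.pi / M s t) * (S ℝ k).eval (2 * Real.cos (Real.pi / M s t)) -
          (S ℝ (k - 1)).eval (2 * Real.cos (Real.pi / M s t)) := by
      simp [S_add_one]
    rw [alternatingWord_succ', cs.wordProd_cons, geomRep_mul_apply, ih]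
    push_cast
    rw [hS, add_sub_cancel_right]
    by_cases hk : Even k <;>
      simp only [hk, Nat.even_add_one, not_true, not_false_iff, if_true, if_false, map_add,
        map_smul, geomRep_simple_simpleRoot_self, geomRep_simple_simpleRoot, M.symmetric t s] <;>
      module

theorem geomRep_simpleRoot_nonneg {w : W} {s : B} (hs : ¬ cs.IsRightDescent w s) :
    0 ≤ geomRep cs w (simpleRoot s) := by
  induction hn : cs.length w using Nat.strong_induction_on generalizing w s with
  | _ n ih =>
  subst hn
  obtain rfl | hw1 := eq_or_ne w 1
  · simpa using simpleRoot_nonneg s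
  obtain ⟨t, ht⟩ := cs.exists_rightDescent_of_ne_one hw1
  have hst : s ≠ t := by rintro rfl; exact hs ht
  obtain ⟨v, k, hw, hlen, hvs, hvt⟩ := exists_eq_mul_wordProd_alternatingWord cs t hs
  have hk : k ≠ 0 := by
    rintro rfl
    rw [show w = v by simpa [alternatingWord] using hw] at ht
    exact hvt ht
  have hred : cs.IsReduced (alternatingWord t s (k + 1)) := by
    refine isReduced_alternatingWord_of_length_eq_add cs (v := v) ?_
    rw [alternatingWord_succ, cs.wordProd_concat, ← mul_assoc, ← hw,
      cs.not_isRightDescent_iff.1 hs, hlen, add_assoc]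
  have hkm : M s t = 0 ∨ k + 1 ≤ M s t := by
    by_contra! hcon
    rw [M.symmetric] at hcon
    exact cs.not_isReduced_alternatingWord t s hcon.1 hcon.2 hred
  have hm1 := M.off_diagonal s t hst
  have hS := S_eval_two_mul_cos_pi_div_nonneg hm1 (hkm.imp_right (Nat.le_of_succ_le))
  have hS' := S_eval_two_mul_cos_pi_div_nonneg hm1 hkm
  rw [Nat.cast_succ, add_sub_cancel_right] at hS'
  have hvs' := ih _ (by lia) hvs rfl
  have hvt' := ih _ (by lia) hvt rfl
  rw [hw, geomRep_mul_apply, geomRep_wordProd_alternatingWord_simpleRoot]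
  split_ifs <;> simp only [map_add, map_smul] <;>
    exact add_nonneg (smul_nonneg ‹_› ‹_›) (smul_nonneg ‹_› ‹_›)

theorem geomRep_simpleRoot_nonpos {w : W} {s : B} (hs : cs.IsRightDescent w s) :
    geomRep cs w (simpleRoot s) ≤ 0 := by
  have h := geomRep_simpleRoot_nonneg cs (w := w * cs.simple s) (s := s)
    (cs.isRightDescent_iff_not_isRightDescent_mul.1 hs)
  rwa [geomRep_mul_apply, geomRep_simple_simpleRoot_self, map_neg, neg_nonneg] at h

end Positivity

section Roots

open CoxeterSystem

/-- A root is an image of a simple root under the geometric representation. -/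
def IsRoot (cs : CoxeterSystem M W) (β : B →₀ ℝ) : Prop :=
  ∃ w i, geomRep cs w (simpleRoot i) = β

variable (cs : CoxeterSystem M W)

theorem isRoot_simpleRoot (i : B) : IsRoot cs (simpleRoot i) :=
  ⟨1, i, by simp⟩

namespace IsRoot

variable {cs} {β : B →₀ ℝ}

theorem map (hβ : IsRoot cs β) (w : W) : IsRoot cs (geomRep cs w β) := by
  obtain ⟨u, i, rfl⟩ := hβ
  exact ⟨w * u, i, geomRep_mul_apply cs w u _⟩

theorem neg (hβ : IsRoot cs β) : IsRoot cs (-β) := by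
  obtain ⟨w, i, rfl⟩ := hβ
  exact ⟨w * cs.simple i, i, by
    rw [geomRep_mul_apply, geomRep_simple_simpleRoot_self, map_neg]⟩

theorem canonicalForm_self (hβ : IsRoot cs β) : canonicalForm M β β = 2 := by
  obtain ⟨w, i, rfl⟩ := hβ
  rw [canonicalForm_geomRep_self, canonicalForm_simpleRoot_self]

theorem ne_zero (hβ : IsRoot cs β) : β ≠ 0 := by
  rintro rfl
  simpa using hβ.canonicalForm_self

theorem nonneg_or_nonpos (hβ : IsRoot cs β) : 0 ≤ β ∨ β ≤ 0 := by
  obtain ⟨w, i, rfl⟩ := hβ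
  by_cases h : cs.IsRightDescent w i
  · exact .inr (geomRep_simpleRoot_nonpos cs h)
  · exact .inl (geomRep_simpleRoot_nonneg cs h)

theorem eq_simpleRoot_of_eq_smul {i : B} {c : ℝ} (hβ : IsRoot cs β) (hc : 0 ≤ c)
    (h : β = c • simpleRoot i) : β = simpleRoot i := by
  have hnorm := hβ.canonicalForm_self
  simp only [h, map_smul, LinearMap.smul_apply, smul_eq_mul, canonicalForm_simpleRoot_self] at hnorm
  rw [h, show c = 1 by nlinarith, one_smul]

theorem geomRep_simple_nonneg (hβ : IsRoot cs β) (hpos : 0 ≤ β) {i : B} (hne : β ≠ simpleRoot i) :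
    0 ≤ geomRep cs (cs.simple i) β := by
  refine (hβ.map (cs.simple i)).nonneg_or_nonpos.resolve_right fun hneg => hne ?_
  refine hβ.eq_simpleRoot_of_eq_smul (hpos i) (Finsupp.ext fun j => ?_)
  obtain rfl | hj := eq_or_ne i j
  · simp [simpleRoot]
  · have hle : β j ≤ 0 := by simpa [geomRep_simple_apply, simpleRoot, hj] using hneg j
    simpa [simpleRoot, hj] using le_antisymm hle (hpos j)

end IsRoot

/-- The inversions of `w`: the positive roots which `w` does not keep positive. -/
def inversionRoots (w : W) : Set (B →₀ ℝ) :=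
  {β | IsRoot cs β ∧ 0 ≤ β ∧ ¬ 0 ≤ geomRep cs w β}

theorem finite_inversionRoots (w : W) : (inversionRoots cs w).Finite := by
  induction w using cs.simple_induction_left with
  | one => exact Set.finite_empty.subset fun β hβ => hβ.2.2 (by simpa using hβ.2.1)
  | mul_simple_left w i ih =>
    refine (ih.insert (geomRep cs w⁻¹ (simpleRoot i))).subset fun β ⟨hβ, hpos, hinv⟩ => ?_
    by_cases hw : 0 ≤ geomRep cs w β
    · rw [geomRep_mul_apply] at hinv
      have hwβ : geomRep cs w β = simpleRoot i := by
        by_contra hne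
        exact hinv ((hβ.map w).geomRep_simple_nonneg hw hne)
      rw [← hwβ, Representation.inv_self_apply]
      exact Set.mem_insert _ _
    · exact .inr ⟨hβ, hpos, hw⟩

end Roots

section Dominance

open Module CoxeterSystem

/-- A linear functional is dominant if it is nonnegative on all simple roots. The dominant
functionals form the closed fundamental chamber. -/
def IsDominant (y : Dual ℝ (B →₀ ℝ)) : Prop :=
  ∀ i, 0 ≤ y (simpleRoot i)

theorem dual_apply_eq_sum (y : Dual ℝ (B →₀ ℝ)) (v : B →₀ ℝ) :
    y v = v.sum fun i a => a * y (simpleRoot i) := by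
  conv_lhs => rw [← v.sum_single, map_finsuppSum]
  simp_rw [← smul_eq_mul, ← map_smul, simpleRoot, Finsupp.smul_single_one]

theorem IsDominant.apply_nonneg {y : Dual ℝ (B →₀ ℝ)} (hy : IsDominant y) {v : B →₀ ℝ}
    (hv : 0 ≤ v) : 0 ≤ y v := by
  rw [dual_apply_eq_sum]
  exact Finsupp.sum_nonneg fun i _ => mul_nonneg (hv i) (hy i)

variable (cs : CoxeterSystem M W) {y : Dual ℝ (B →₀ ℝ)}

theorem comp_geomRep_simple_neg_subset (y : Dual ℝ (B →₀ ℝ)) {i : B} (hi : y (simpleRoot i) < 0) :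
    {β | IsRoot cs β ∧ 0 ≤ β ∧ (y ∘ₗ geomRep cs (cs.simple i)) β < 0} ⊆
      geomRep cs (cs.simple i) '' ({β | IsRoot cs β ∧ 0 ≤ β ∧ y β < 0} \ {simpleRoot i}) := by
  rintro β ⟨hβ, hpos, hneg⟩
  have hinvol : geomRep cs (cs.simple i) (geomRep cs (cs.simple i) β) = β := by
    rw [← geomRep_mul_apply, cs.simple_mul_simple_self, map_one, End.one_apply]
  refine ⟨geomRep cs (cs.simple i) β, ⟨⟨hβ.map _, hβ.geomRep_simple_nonneg hpos ?_, hneg⟩, ?_⟩,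
    hinvol⟩
  · rintro rfl
    rw [LinearMap.comp_apply, geomRep_simple_simpleRoot_self, map_neg] at hneg
    linarith
  · intro h
    rw [h, geomRep_simple_simpleRoot_self] at hinvol
    have := hpos i
    rw [← hinvol] at this
    norm_num [simpleRoot] at this

theorem exists_isDominant_comp_geomRep
    (hfin : {β | IsRoot cs β ∧ 0 ≤ β ∧ y β < 0}.Finite) :
    ∃ w, IsDominant (y ∘ₗ geomRep cs w) := by
  induction hn : {β | IsRoot cs β ∧ 0 ≤ β ∧ y β < 0}.ncard using Nat.strong_induction_on
    generalizing y with
  | _ n ih =>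
  subst hn
  by_cases hy : IsDominant y
  · exact ⟨1, by simpa [End.one_eq_id] using hy⟩
  obtain ⟨i, hi⟩ : ∃ i, y (simpleRoot i) < 0 := by simpa [IsDominant] using hy
  have hsub := comp_geomRep_simple_neg_subset cs y hi
  have hfin' := hfin.subset (Set.sdiff_subset (t := {simpleRoot i}))
  have hlt := (Set.ncard_le_ncard hsub (hfin'.image _)).trans_lt <|
    (Set.ncard_image_le hfin').trans_lt <|
      Set.ncard_sdiff_singleton_lt_of_mem ⟨isRoot_simpleRoot cs i, simpleRoot_nonneg i, hi⟩ hfin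
  obtain ⟨w, hw⟩ := ih _ hlt ((hfin'.image _).subset hsub) rfl
  refine ⟨cs.simple i * w, ?_⟩
  rwa [map_mul, End.mul_eq_comp, ← LinearMap.comp_assoc]

/-- The stabilizer of a linear functional under the action of `W` contragredient to the geometric
representation. -/
def functionalStabilizer (y : Dual ℝ (B →₀ ℝ)) : Subgroup W where
  carrier := {v | ∀ z, y (geomRep cs v z) = y z}
  one_mem' := by simp
  mul_mem' {u v} hu hv z := by rw [geomRep_mul_apply, hu, hv]
  inv_mem' {v} hv z := by rw [← hv, Representation.self_inv_apply]

variable {cs}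

theorem simple_mem_functionalStabilizer {i : B} (hi : y (simpleRoot i) = 0) :
    cs.simple i ∈ functionalStabilizer cs y := by
  intro z
  rw [geomRep_simple_apply, map_sub, map_smul, hi, smul_zero, sub_zero]

theorem IsDominant.apply_simpleRoot_eq_zero (hy : IsDominant y) {v : W}
    (hv : v ∈ functionalStabilizer cs y) {i : B} (hi : cs.IsRightDescent v i) :
    y (simpleRoot i) = 0 := by
  have h := hy.apply_nonneg (neg_nonneg.2 (geomRep_simpleRoot_nonpos cs hi))
  rw [map_neg, hv] at h
  exact le_antisymm (neg_nonneg.1 h) (hy i)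

theorem IsDominant.functionalStabilizer_le_closure (hy : IsDominant y) :
    functionalStabilizer cs y ≤
      Subgroup.closure (cs.simple '' {i | y (simpleRoot i) = 0}) := by
  intro v hv
  induction hn : cs.length v using Nat.strong_induction_on generalizing v with
  | _ n ih =>
  subst hn
  obtain rfl | hv1 := eq_or_ne v 1
  · exact one_mem _
  obtain ⟨i, hi⟩ := cs.exists_rightDescent_of_ne_one hv1
  have hyi := hy.apply_simpleRoot_eq_zero hv hi
  have hmem := ih _ hi (mul_mem hv (simple_mem_functionalStabilizer hyi)) rfl
  simpa using mul_mem hmem (Subgroup.subset_closure (Set.mem_image_of_mem cs.simple hyi))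

theorem IsDominant.eq_one_of_forall_simpleRoot (hy : IsDominant y) {v : W}
    (hv : v ∈ functionalStabilizer cs y)
    (hfix : ∀ i, y (simpleRoot i) = 0 → geomRep cs v (simpleRoot i) = simpleRoot i) : v = 1 := by
  by_contra hv1
  obtain ⟨i, hi⟩ := cs.exists_rightDescent_of_ne_one hv1
  have hle := geomRep_simpleRoot_nonpos cs hi i
  rw [hfix i (hy.apply_simpleRoot_eq_zero hv hi), simpleRoot_apply_self] at hle
  exact not_lt_of_ge hle one_pos

theorem IsDominant.finite_functionalStabilizer (hy : IsDominant y)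
    (hfin : {β | IsRoot cs β ∧ y β = 0}.Finite) : (functionalStabilizer cs y : Set W).Finite := by
  have hJ : {i : B | y (simpleRoot i) = 0}.Finite :=
    hfin.preimage linearIndependent_simpleRoot.injective.injOn |>.subset
      fun i hi => ⟨isRoot_simpleRoot cs i, hi⟩
  have := hJ.to_subtype
  let orbit (v : W) (i : {i : B | y (simpleRoot i) = 0}) := geomRep cs v (simpleRoot i.1)
  have hmaps : Set.MapsTo orbit (functionalStabilizer cs y)
      {g | ∀ i, g i ∈ {β | IsRoot cs β ∧ y β = 0}} :=
    fun v hv i => ⟨(isRoot_simpleRoot cs i.1).map v, (hv _).trans i.2⟩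
  refine Set.Finite.of_injOn hmaps (fun v hv u hu huv => ?_) (Set.Finite.pi' fun _ => hfin)
  refine (inv_mul_eq_one.1 (hy.eq_one_of_forall_simpleRoot (mul_mem (inv_mem hu) hv) ?_)).symm
  intro i hi
  have hvu : geomRep cs v (simpleRoot i) = geomRep cs u (simpleRoot i) := congrFun huv ⟨i, hi⟩
  rw [geomRep_mul_apply, hvu, Representation.inv_self_apply]

end Dominance

section FiniteSubgroups

open Module Representation CoxeterSystem

theorem exists_dual_pos_and_ne_zero {A : Set (B →₀ ℝ)} (hA : A.Finite) (h0 : 0 ∉ A) :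
    ∃ x : Dual ℝ (B →₀ ℝ), (∀ i, 0 < x (simpleRoot i)) ∧ ∀ a ∈ A, x a ≠ 0 := by
  induction A, hA using Set.Finite.induction_on with
  | empty => exact ⟨Finsupp.linearCombination ℝ 1, by simp [simpleRoot], by simp⟩
  | @insert a A _ hA ih =>
    obtain ⟨x, hx, hxA⟩ := ih (fun h => h0 (.inr h))
    obtain ⟨i, hi⟩ : ∃ i, a i ≠ 0 := Finsupp.ne_iff.1 fun h => h0 (.inl h.symm)
    obtain ⟨ε, hε, havoid⟩ :=
      ((Set.Ioi_infinite (0 : ℝ)).sdiff ((hA.insert a).image fun b => -x b / b i)).nonempty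
    refine ⟨x + ε • Finsupp.lapply i, fun j => ?_, fun b hb hzero => ?_⟩
    · exact add_pos_of_pos_of_nonneg (hx j)
        (mul_nonneg (Set.mem_Ioi.1 hε).le (simpleRoot_nonneg j i))
    · have hsum : x b + ε * b i = 0 := hzero
      by_cases hbi : b i = 0
      · obtain rfl | hbA := hb
        · exact hi hbi
        · exact hxA b hbA (by simpa [hbi] using hsum)
      · exact havoid ⟨b, hb, by dsimp only; rw [div_eq_iff hbi]; linarith⟩

theorem dual_apply_pos {x : Dual ℝ (B →₀ ℝ)} (hx : ∀ i, 0 < x (simpleRoot i)) {v : B →₀ ℝ}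
    (hv : 0 ≤ v) (hv0 : v ≠ 0) : 0 < x v := by
  rw [dual_apply_eq_sum]
  exact Finset.sum_pos
    (fun i hi => mul_pos ((hv i).lt_of_ne' (Finsupp.mem_support_iff.1 hi)) (hx i))
    (Finsupp.support_nonempty_iff.2 hv0)

variable (cs : CoxeterSystem M W)

theorem dual_norm_apply_pos (D : Subgroup W) [Fintype D] {x : Dual ℝ (B →₀ ℝ)}
    (hx : ∀ i, 0 < x (simpleRoot i)) {β : B →₀ ℝ} (hβ : IsRoot cs β) (hpos : 0 ≤ β)
    (hinv : ∀ d : D, β ∉ inversionRoots cs d) :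
    0 < x (Representation.norm ((geomRep cs).comp D.subtype) β) := by
  rw [Representation.norm, LinearMap.sum_apply, map_sum]
  refine Finset.sum_pos (fun d _ => dual_apply_pos hx ?_ (hβ.map d).ne_zero) Finset.univ_nonempty
  by_contra hneg
  exact hinv d ⟨hβ, hpos, hneg⟩

theorem exists_dual_le_functionalStabilizer (D : Subgroup W) [Finite D] :
    ∃ y : Dual ℝ (B →₀ ℝ), D ≤ functionalStabilizer cs y ∧
      {β | IsRoot cs β ∧ 0 ≤ β ∧ y β ≤ 0}.Finite ∧
      ∀ β, IsRoot cs β → y β = 0 → β ∈ Coinvariants.ker ((geomRep cs).comp D.subtype) := by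
  have := Fintype.ofFinite D
  set S := Representation.norm ((geomRep cs).comp D.subtype)
  have hZ : (⋃ d : D, inversionRoots cs d).Finite :=
    Set.finite_iUnion fun d => finite_inversionRoots cs d
  obtain ⟨x, hx, hxS⟩ := exists_dual_pos_and_ne_zero
    ((hZ.image S).subset Set.sdiff_subset) (Set.notMem_sdiff_of_mem (Set.mem_singleton 0))
  have hnonpos : ∀ β, IsRoot cs β → 0 ≤ β → x (S β) ≤ 0 → β ∈ ⋃ d : D, inversionRoots cs d := by
    intro β hβ hpos hle
    by_contra hinv
    exact (dual_norm_apply_pos cs D hx hβ hpos (by simpa using hinv)).not_ge hle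
  have hzero : ∀ β, IsRoot cs β → 0 ≤ β → x (S β) = 0 → S β = 0 := by
    intro β hβ hpos hβ0
    by_contra hne
    exact hxS (S β) ⟨Set.mem_image_of_mem S (hnonpos β hβ hpos hβ0.le), hne⟩ hβ0
  refine ⟨x ∘ₗ S, fun d hd v => congrArg x (norm_self_apply _ (⟨d, hd⟩ : D) v),
    hZ.subset fun β hβ => hnonpos β hβ.1 hβ.2.1 hβ.2.2, fun β hβ hβ0 => ?_⟩
  refine mem_coinvariantsKer_of_norm_apply_eq_zero _ (by simp) ?_
  obtain hpos | hneg := hβ.nonneg_or_nonpos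
  · exact hzero β hβ hpos hβ0
  · have := hzero (-β) hβ.neg (neg_nonneg.2 hneg) (by simpa using hβ0)
    rwa [map_neg, neg_eq_zero] at this

theorem inv_mul_mul_mem_functionalStabilizer {y : Dual ℝ (B →₀ ℝ)} {v : W}
    (hv : v ∈ functionalStabilizer cs y) (w : W) :
    w⁻¹ * v * w ∈ functionalStabilizer cs (y ∘ₗ geomRep cs w) := by
  intro z
  simp only [LinearMap.comp_apply, geomRep_mul_apply, Representation.self_inv_apply]
  exact hv _

/-- Tits' theorem on finite subgroups of Coxeter groups; the last clause is what bounds the size of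
`J` when `D` is generated by reflections. -/
theorem exists_spherical_conj_mem_closure (D : Subgroup W) [Finite D] :
    ∃ (J : Set B) (w : W), Spherical cs J ∧
      (∀ d ∈ D, w⁻¹ * d * w ∈ Subgroup.closure (cs.simple '' J)) ∧
      ∀ i ∈ J, geomRep cs w (simpleRoot i) ∈
        Coinvariants.ker ((geomRep cs).comp D.subtype) := by
  obtain ⟨y, hD, hfin, hker⟩ := exists_dual_le_functionalStabilizer cs D
  obtain ⟨w, hw⟩ := exists_isDominant_comp_geomRep cs
    (hfin.subset fun β hβ => ⟨hβ.1, hβ.2.1, hβ.2.2.le⟩)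
  have hzero : {β | IsRoot cs β ∧ y β = 0}.Finite := by
    refine (hfin.union (hfin.image Neg.neg)).subset fun β ⟨hβ, hβ0⟩ => ?_
    obtain hpos | hneg := hβ.nonneg_or_nonpos
    · exact .inl ⟨hβ, hpos, hβ0.le⟩
    · exact .inr ⟨-β, ⟨hβ.neg, neg_nonneg.2 hneg, by simp [hβ0]⟩, neg_neg β⟩
  have hzero' : {β | IsRoot cs β ∧ (y ∘ₗ geomRep cs w) β = 0}.Finite :=
    (hzero.preimage ((geomRep cs).apply_bijective w).injective.injOn).subset
      fun β hβ => ⟨hβ.1.map w, hβ.2⟩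
  refine ⟨{i | (y ∘ₗ geomRep cs w) (simpleRoot i) = 0}, w, ?_, fun d hd => ?_, fun i hi => ?_⟩
  · refine (hw.finite_functionalStabilizer hzero').subset ((Subgroup.closure_le _).2 ?_)
    rintro _ ⟨i, hi, rfl⟩
    exact simple_mem_functionalStabilizer hi
  · exact hw.functionalStabilizer_le_closure (inv_mul_mul_mem_functionalStabilizer cs (hD hd) w)
  · exact hker _ ((isRoot_simpleRoot cs i).map w) hi

end FiniteSubgroups

section ReflectionSubgroups

open CoxeterSystem Representation

variable (cs : CoxeterSystem M W)

theorem exists_geomRep_sub_mem_span_singleton {t : W} (ht : cs.IsReflection t) :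
    ∃ γ : B →₀ ℝ, ∀ v, geomRep cs t v - v ∈ Submodule.span ℝ {γ} := by
  obtain ⟨w, i, rfl⟩ := ht
  refine ⟨geomRep cs w (simpleRoot i), fun v => Submodule.mem_span_singleton.2
    ⟨-canonicalForm M (simpleRoot i) (geomRep cs w⁻¹ v), ?_⟩⟩
  rw [geomRep_mul_apply, geomRep_mul_apply, geomRep_simple_apply, map_sub, map_smul,
    Representation.self_inv_apply]
  module

theorem exists_coinvariantsKer_le_span {T : Set W} (hT : ∀ t ∈ T, cs.IsReflection t) :
    ∃ Γ : Set (B →₀ ℝ), Γ.encard ≤ T.encard ∧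
      Coinvariants.ker ((geomRep cs).comp (Subgroup.closure T).subtype) ≤ Submodule.span ℝ Γ := by
  choose! γ hγ using fun t ht => exists_geomRep_sub_mem_span_singleton cs (hT t ht)
  exact ⟨γ '' T, Set.encard_image_le γ T, coinvariantsKer_comp_subtype_closure_le _ fun t ht v =>
    Submodule.span_mono (Set.singleton_subset_iff.2 (Set.mem_image_of_mem γ ht)) (hγ t ht v)⟩

theorem exists_spherical_encard_le_conj_mem_closure {T : Set W}
    (hT : ∀ t ∈ T, cs.IsReflection t) (hfin : (Subgroup.closure T : Set W).Finite) :
    ∃ (J : Set B) (w : W), Spherical cs J ∧ J.encard ≤ T.encard ∧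
      ∀ d ∈ Subgroup.closure T, w⁻¹ * d * w ∈ Subgroup.closure (cs.simple '' J) := by
  have : Finite (Subgroup.closure T) := hfin
  obtain ⟨J, w, hJ, hconj, hker⟩ := exists_spherical_conj_mem_closure cs (Subgroup.closure T)
  obtain ⟨Γ, hΓ, hspan⟩ := exists_coinvariantsKer_le_span cs hT
  have hindep : LinearIndependent ℝ (geomRep cs w ∘ simpleRoot) :=
    linearIndependent_simpleRoot.map' _
      (LinearMap.ker_eq_bot.2 ((geomRep cs).apply_bijective w).injective)
  refine ⟨J, w, hJ, ?_, hconj⟩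
  exact (encard_le_of_linearIndepOn_of_image_subset_span (hindep.linearIndepOn (s := J))
    (Set.image_subset_iff.2 fun i hi => hspan (hker i hi))).trans hΓ

theorem nonempty_of_conj_mem_closure {t : W} (ht : cs.IsReflection t) {J : Set B} {w : W}
    (hmem : w⁻¹ * t * w ∈ Subgroup.closure (cs.simple '' J)) : J.Nonempty := by
  rw [Set.nonempty_iff_ne_empty]
  rintro rfl
  have hone : w⁻¹ * t * w = 1 := by simpa using hmem
  rw [mul_eq_one_iff_eq_inv, inv_mul_eq_iff_eq_mul, mul_inv_cancel] at hone
  simpa [hone] using ht.odd_length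

end ReflectionSubgroups

theorem finite_dihedral_reflection_subgroup_conjugate_into_parabolic_general
    (cs : CoxeterSystem M W) (s s' : W)
    (hs : cs.IsReflection s) (hs' : cs.IsReflection s')
    (hfin : (Subgroup.closure {s, s'} : Set W).Finite) :
    ∃ r r' : B, (Subgroup.closure {cs.simple r, cs.simple r'} : Set W).Finite ∧
      ∃ w : W, (fun x => w * x * w⁻¹) '' (Subgroup.closure {s, s'} : Set W) ⊆
        (Subgroup.closure {cs.simple r, cs.simple r'} : Set W) := by
  obtain ⟨J, w, hJ, hcard, hconj⟩ :=
    exists_spherical_encard_le_conj_mem_closure cs (T := {s, s'}) (by simp [hs, hs']) hfin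
  have hne : J.Nonempty :=
    nonempty_of_conj_mem_closure cs hs (hconj s (Subgroup.subset_closure (Set.mem_insert s {s'})))
  have hpair : ({s, s'} : Set W).encard ≤ 2 := by
    simpa [one_add_one_eq_two] using Set.encard_insert_le {s'} s
  obtain ⟨r, r', rfl⟩ := exists_eq_pair_of_encard_le_two hne (hcard.trans hpair)
  rw [Set.image_pair] at hconj
  refine ⟨r, r', by simpa only [Spherical, Set.image_pair] using hJ, w⁻¹, ?_⟩
  rintro _ ⟨d, hd, rfl⟩
  simpa using hconj d hd

/-- Every finite subgroup of a Coxeter group generated by two reflections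
is conjugate into a finite standard parabolic subgroup of rank two. -/
theorem finite_dihedral_reflection_subgroup_conjugate_into_parabolic
    [Finite B] (cs : CoxeterSystem M W) (s s' : W)
    (hs : cs.IsReflection s) (hs' : cs.IsReflection s')
    (hfin : (Subgroup.closure {s, s'} : Set W).Finite) :
    ∃ r r' : B, (Subgroup.closure {cs.simple r, cs.simple r'} : Set W).Finite ∧
      ∃ w : W, (fun x => w * x * w⁻¹) '' (Subgroup.closure {s, s'} : Set W) ⊆
        (Subgroup.closure {cs.simple r, cs.simple r'} : Set W) :=
  finite_dihedral_reflection_subgroup_conjugate_into_parabolic_general cs s s' hs hs' hfin
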